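/- Let ε ∈ (0, π/6) and let G = (V,E) be an ε-regular graph such that every straight path of G is open. Then F_bond(G) = Σ_{x ∈ V} (4 − #N(x,E)) = 2·#S(G), where #S(G) is the number of strata counted with multiplicity. -/

import Mathlib

open scoped Real

noncomputable section

abbrev Pt : Type := EuclideanSpace ℝ (Fin 2)

/-- The clockwise angle in `[0, 2π)` between the vectors `u` and `v`. -/
noncomputable def cwAngle (u v : Pt) : ℝ :=
  let a := Complex.arg ((⟨u 0, u 1⟩ : ℂ) * (starRingEnd ℂ) (⟨v 0, v 1⟩ : ℂ))
  if a < 0 then a + 2 * π else a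

/-- A graph with finitely many vertices in the plane and unordered pairs of distinct
vertices as edges. -/
structure BondGraph where
  V : Set Pt
  finV : V.Finite
  E : Set (Sym2 Pt)
  not_diag : ∀ e ∈ E, ¬ e.IsDiag
  mem_V : ∀ e ∈ E, ∀ x ∈ e, x ∈ V

/-- The neighborhood `N(x, E)`. -/
def nbhd (G : BondGraph) (x : Pt) : Set Pt := {y | s(x, y) ∈ G.E}

/-- The degree `#N(x, E)`. -/
noncomputable def deg (G : BondGraph) (x : Pt) : ℕ := (nbhd G x).ncard

/-- The bond energy `F_bond(G) = Σ_{x ∈ V} (4 − #N(x,E))`. -/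
noncomputable def Fbond (G : BondGraph) : ℤ := ∑ᶠ x ∈ G.V, ((4 : ℤ) - (deg G x : ℤ))

def goodAngles (ε : ℝ) : Set ℝ :=
  Set.Icc (π / 2 - ε) (π / 2 + ε) ∪ Set.Icc (π - ε) (π + ε) ∪
    Set.Icc (3 * π / 2 - ε) (3 * π / 2 + ε)

/-- `ε`-regularity of a graph. -/
def EpsRegular (ε : ℝ) (G : BondGraph) : Prop :=
  (∀ x y : Pt, s(x, y) ∈ G.E → 1 - ε ≤ dist x y) ∧
  (∀ x y z : Pt, s(x, y) ∈ G.E → s(z, y) ∈ G.E → x ≠ z →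
    cwAngle (x - y) (z - y) ∈ goodAngles ε)

/-- The `i`-th vertex of a path (with junk value `0` out of range). -/
def nth (γ : List Pt) (i : ℕ) : Pt := γ.getD i 0

/-- The interior angle `θ_{i+2} = θ_{x_{i+2}, x_{i+1}, x_i}` of a path (`0`-based). -/
noncomputable def pathAngle (γ : List Pt) (i : ℕ) : ℝ :=
  cwAngle (nth γ (i + 2) - nth γ (i + 1)) (nth γ i - nth γ (i + 1))

/-- The list of (unordered) edges of a path. -/
def pathEdges (γ : List Pt) : List (Sym2 Pt) := (γ.zip γ.tail).map (fun p => s(p.1, p.2))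

/-- A straight path of the graph `G`. -/
def IsStraightPath (ε : ℝ) (G : BondGraph) (γ : List Pt) : Prop :=
  2 ≤ γ.length ∧
  (∀ x ∈ γ, x ∈ G.V) ∧
  γ.Chain' (fun a b => s(a, b) ∈ G.E) ∧
  (∀ i : ℕ, i + 2 < γ.length → pathAngle γ i ∈ Set.Icc (π - ε) (π + ε)) ∧
  (pathEdges γ).Nodup

/-- A path is closed if its first and last points coincide. -/
def IsClosedPath (γ : List Pt) : Prop := γ.head? = γ.getLast?

/-- The angle excess `θ_ex(γ)` of a path. -/
noncomputable def thetaEx (γ : List Pt) : ℝ :=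
  ∑ i ∈ Finset.range (γ.length - 2), |pathAngle γ i - π|

/-- Two lists are identified if they agree up to reversal. -/
def revSetoid : Setoid (List Pt) where
  r a b := a = b ∨ a = b.reverse
  iseqv := by
    constructor
    · intro a; exact Or.inl rfl
    · intro a b h
      rcases h with h | h
      · exact Or.inl h.symm
      · right; rw [h, List.reverse_reverse]
    · intro a b c hab hbc
      rcases hab with h | h <;> rcases hbc with h' | h' <;>
        simp [h, h', List.reverse_reverse]

/-- An (undirected) stratum: a list of points up to reversal. -/
def Stratum : Type := Quotient revSetoid

/-- The length `l(s)` of a stratum. -/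
def Stratum.len : Stratum → ℕ :=
  Quotient.lift List.length (by rintro a b (rfl | rfl) <;> simp)

/-- The set of vertices of a stratum. -/
def Stratum.verts : Stratum → Set Pt :=
  Quotient.lift (fun l => {x : Pt | x ∈ l}) (by
    rintro a b (rfl | rfl)
    · rfl
    · ext x; simp)

/-- `γ` is a subpath of `γ'`, up to reversal. -/
def SubPathUpToRev (γ γ' : List Pt) : Prop := γ <:+: γ' ∨ γ <:+: γ'.reverse

/-- A maximal straight path (maximal with respect to inclusion). -/
def IsMaximalStraight (ε : ℝ) (G : BondGraph) (γ : List Pt) : Prop :=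
  IsStraightPath ε G γ ∧
    ∀ γ' : List Pt, IsStraightPath ε G γ' → SubPathUpToRev γ γ' →
      (γ' = γ ∨ γ' = γ.reverse)

/-- `x ∈ V₂^π`: a vertex of degree two whose bond angle lies in `[π−ε, π+ε]`. -/
def V2pi (ε : ℝ) (G : BondGraph) (x : Pt) : Prop :=
  x ∈ G.V ∧ ∃ x₁ x₂ : Pt, x₁ ≠ x₂ ∧ nbhd G x = {x₁, x₂} ∧
    cwAngle (x₁ - x) (x₂ - x) ∈ Set.Icc (π - ε) (π + ε)

/-- The set of strata `S(G)`: maximal straight paths, together with the degenerate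
one-point stratum `(x)` counted twice for `x ∈ V₀` and once for `x ∈ V₁ ∪ V₂^π`
(the `Fin 2` tag realizes the multiplicity). -/
def strataSet (ε : ℝ) (G : BondGraph) : Set (Stratum × Fin 2) :=
  {p | ∃ γ : List Pt, IsMaximalStraight ε G γ ∧ p = (Quotient.mk revSetoid γ, 0)}
  ∪ {p | ∃ x ∈ G.V, deg G x = 0 ∧
      (p = (Quotient.mk revSetoid [x], 0) ∨ p = (Quotient.mk revSetoid [x], 1))}
  ∪ {p | ∃ x ∈ G.V, (deg G x = 1 ∨ V2pi ε G x) ∧ p = (Quotient.mk revSetoid [x], 0)}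

/-- The set of orthogonal strata `S^⊥(s)`. -/
def orthStrata (ε : ℝ) (G : BondGraph) (s : Stratum × Fin 2) : Set (Stratum × Fin 2) :=
  {s' | s' ∈ strataSet ε G ∧ s' ≠ s ∧ (Stratum.verts s.1 ∩ Stratum.verts s'.1).Nonempty}


section LocalStructure

lemma coe_cwAngle {u v : Pt} (hu : u ≠ 0) (hv : v ≠ 0) :
    (cwAngle u v : Real.Angle) =
      (Complex.arg ⟨u 0, u 1⟩ : Real.Angle) - (Complex.arg ⟨v 0, v 1⟩ : Real.Angle) := by
  have toComplex_ne_zero : ∀ w : Pt, w ≠ 0 → (⟨w 0, w 1⟩ : ℂ) ≠ 0 := by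
    intro w hw h
    rw [Complex.ext_iff] at h
    apply hw
    ext i
    fin_cases i
    · exact h.1
    · exact h.2
  have harg : (Complex.arg ((⟨u 0, u 1⟩ : ℂ) * (starRingEnd ℂ) (⟨v 0, v 1⟩ : ℂ)) : Real.Angle) =
      (Complex.arg ⟨u 0, u 1⟩ : Real.Angle) - (Complex.arg ⟨v 0, v 1⟩ : Real.Angle) := by
    rw [Complex.arg_mul_coe_angle (toComplex_ne_zero u hu)
      ((map_ne_zero _).2 (toComplex_ne_zero v hv)), Complex.arg_conj_coe_angle, sub_eq_add_neg]
  unfold cwAngle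
  simp only
  split_ifs
  · rw [Real.Angle.coe_add, Real.Angle.coe_two_pi, add_zero, harg]
  · exact harg

lemma cwAngle_self (u : Pt) : cwAngle u u = 0 := by
  have h : Complex.arg ((⟨u 0, u 1⟩ : ℂ) * (starRingEnd ℂ) (⟨u 0, u 1⟩ : ℂ)) = 0 := by
    rw [Complex.mul_conj, Complex.arg_ofReal_of_nonneg (Complex.normSq_nonneg _)]
  simp [cwAngle, h]

lemma cwAngle_add {u v w : Pt} (hu : u ≠ 0) (hv : v ≠ 0) (hw : w ≠ 0) :
    ∃ n : ℤ, cwAngle u v + cwAngle v w - cwAngle u w = 2 * π * n := by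
  rw [← Real.Angle.angle_eq_iff_two_pi_dvd_sub, Real.Angle.coe_add, coe_cwAngle hu hv,
    coe_cwAngle hv hw, coe_cwAngle hu hw]
  abel

lemma exists_quarter_of_mem_goodAngles {ε θ : ℝ} (hθ : θ ∈ goodAngles ε) :
    ∃ j : ℤ, (j = 1 ∨ j = 2 ∨ j = 3) ∧ |θ - j * (π / 2)| ≤ ε := by
  rcases hθ with (h | h) | h
  · exact ⟨1, by simp, by rw [abs_le]; push_cast; constructor <;> linarith [h.1, h.2]⟩
  · exact ⟨2, by simp, by rw [abs_le]; push_cast; constructor <;> linarith [h.1, h.2]⟩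
  · exact ⟨3, by simp, by rw [abs_le]; push_cast; constructor <;> linarith [h.1, h.2]⟩

/-- The only integer multiple of `π / 2` of absolute value at most `3 * ε < π / 2` is `0`. -/
lemma quarter_eq_zero {ε : ℝ} (hε : ε < π / 6) {m : ℤ} (h : |m * (π / 2)| ≤ 3 * ε) : m = 0 := by
  have hpi := Real.pi_pos
  rw [abs_le] at h
  have h1 : (m : ℝ) < 1 := by nlinarith
  have h2 : (-1 : ℝ) < m := by nlinarith
  have h1' : m < 1 := by exact_mod_cast h1
  have h2' : -1 < m := by exact_mod_cast h2
  omega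

lemma ne_of_bond {G : BondGraph} {x y : Pt} (h : s(x, y) ∈ G.E) : x ≠ y :=
  fun hxy => G.not_diag _ h (by simpa using hxy)

/-- The bonds at a vertex point in four directions labelled by `ZMod 4`, and two bonds are
opposite exactly when their labels differ by `2`. -/
lemma exists_direction_label {ε : ℝ} (hε0 : 0 < ε) (hε : ε < π / 6) {G : BondGraph}
    (hreg : EpsRegular ε G) (x : Pt) :
    ∃ κ : Pt → ZMod 4, Set.InjOn κ (nbhd G x) ∧ ∀ y ∈ nbhd G x, ∀ z ∈ nbhd G x,
      (cwAngle (y - x) (z - x) ∈ Set.Icc (π - ε) (π + ε) ↔ κ z = κ y + 2) := by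
  rcases Set.eq_empty_or_nonempty (nbhd G x) with hempty | ⟨o, ho⟩
  · exact ⟨fun _ => 0, by simp [hempty], by simp [hempty]⟩
  have hpi := Real.pi_pos
  have hne : ∀ y ∈ nbhd G x, y - x ≠ 0 := fun y hy =>
    sub_ne_zero.2 (ne_of_bond (G := G) hy).symm
  have hgood : ∀ y ∈ nbhd G x, ∀ z ∈ nbhd G x, y ≠ z →
      cwAngle (y - x) (z - x) ∈ goodAngles ε := fun y hy z hz hyz =>
    hreg.2 y x z (Sym2.eq_swap ▸ hy) (Sym2.eq_swap ▸ hz) hyz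
  have hlabel : ∀ y : Pt, ∃ k : ℤ, y ∈ nbhd G x →
      |cwAngle (o - x) (y - x) - k * (π / 2)| ≤ ε := by
    intro y
    by_cases hy : y ∈ nbhd G x
    · by_cases hoy : o = y
      · exact ⟨0, fun _ => by simp [← hoy, cwAngle_self, hε0.le]⟩
      · obtain ⟨j, -, hj⟩ := exists_quarter_of_mem_goodAngles (hgood o ho y hy hoy)
        exact ⟨j, fun _ => hj⟩
    · exact ⟨0, fun h => absurd h hy⟩
  choose k hk using hlabel
  have hdiff : ∀ y ∈ nbhd G x, ∀ z ∈ nbhd G x, y ≠ z → ∃ j : ℤ, (j = 1 ∨ j = 2 ∨ j = 3) ∧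
      |cwAngle (y - x) (z - x) - j * (π / 2)| ≤ ε ∧ ((k z : ℤ) : ZMod 4) = (k y : ZMod 4) + j := by
    intro y hy z hz hyz
    obtain ⟨j, hj, hjε⟩ := exists_quarter_of_mem_goodAngles (hgood y hy z hz hyz)
    refine ⟨j, hj, hjε, ?_⟩
    obtain ⟨n, hn⟩ := cwAngle_add (hne o ho) (hne y hy) (hne z hz)
    have hy' := hk y hy
    have hz' := hk z hz
    have hm : k y + j - k z - 4 * n = 0 := by
      apply quarter_eq_zero hε
      rw [abs_le] at *
      push_cast
      constructor <;> linarith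
    have hzk : k z = k y + j - 4 * n := by omega
    rw [hzk]
    push_cast
    have h4 : (4 : ZMod 4) = 0 := rfl
    rw [h4]
    ring
  refine ⟨fun y => (k y : ZMod 4), ?_, ?_⟩
  · intro y hy z hz hyz
    by_contra hne'
    obtain ⟨j, hj, -, hjk⟩ := hdiff y hy z hz hne'
    simp only at hyz
    rw [← hyz, left_eq_add] at hjk
    rcases hj with rfl | rfl | rfl <;> revert hjk <;> decide
  · intro y hy z hz
    by_cases hyz : y = z
    · subst hyz
      rw [cwAngle_self]
      constructor
      · intro h
        linarith [h.1]
      · intro h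
        rw [left_eq_add] at h
        exact absurd h (by decide)
    · obtain ⟨j, hj, hjε, hjk⟩ := hdiff y hy z hz hyz
      simp only [hjk, add_right_inj]
      rw [abs_le] at hjε
      rcases hj with rfl | rfl | rfl
      · refine iff_of_false (fun h => ?_) (by decide)
        push_cast at hjε
        linarith [h.1]
      · refine iff_of_true ?_ (by decide)
        push_cast at hjε
        constructor <;> linarith
      · refine iff_of_false (fun h => ?_) (by decide)
        push_cast at hjε
        linarith [h.2]

open Classical in
lemma four_sub_card_eq {α : Type*} (N : Finset α) (κ : α → ZMod 4)
    (hκ : Set.InjOn κ (N : Set α)) :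
    (4 : ℤ) - N.card = (N.filter fun y => ∀ z ∈ N, κ z ≠ κ y + 2).card +
      2 * ((if N.card = 0 then 2 else 0) +
        if N.card = 1 ∨ (N.card = 2 ∧ ∃ y ∈ N, ∃ z ∈ N, κ z = κ y + 2) then 1 else 0) := by
  have hcard : (N.image κ).card = N.card := Finset.card_image_of_injOn hκ
  have hfilter : ((N.image κ).filter fun s => s + 2 ∉ N.image κ).card =
      (N.filter fun y => ∀ z ∈ N, κ z ≠ κ y + 2).card := by
    rw [Finset.filter_image,
      Finset.card_image_of_injOn (hκ.mono (Finset.coe_subset.2 (Finset.filter_subset _ _)))]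
    congr 1
    ext y
    simp
  have hpair : (∃ y ∈ N, ∃ z ∈ N, κ z = κ y + 2) ↔ ∃ s ∈ N.image κ, s + 2 ∈ N.image κ := by
    simp
  have key : ∀ S : Finset (ZMod 4), (4 : ℤ) - S.card = (S.filter fun s => s + 2 ∉ S).card +
      2 * ((if S.card = 0 then 2 else 0) +
        if S.card = 1 ∨ (S.card = 2 ∧ ∃ s ∈ S, s + 2 ∈ S) then 1 else 0) := by
    decide
  rw [← hfilter, ← hcard]
  simp only [hpair]
  convert key (N.image κ)

end LocalStructure

section StraightWalks

/-- The bonds from `b` to `a` and to `c` are opposite to each other. -/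
def IsOpposite (ε : ℝ) (G : BondGraph) (b a c : Pt) : Prop :=
  s(b, a) ∈ G.E ∧ s(b, c) ∈ G.E ∧ cwAngle (c - b) (a - b) ∈ Set.Icc (π - ε) (π + ε)

/-- A walk that goes straight at each of its inner vertices, possibly repeating edges. -/
structure IsStraightWalk (ε : ℝ) (G : BondGraph) (γ : List Pt) : Prop where
  bond : ∀ a b, [a, b] <:+: γ → s(a, b) ∈ G.E
  opposite : ∀ a b c, [a, b, c] <:+: γ → IsOpposite ε G b a c

variable {ε : ℝ} {G : BondGraph}

lemma IsOpposite.symm (hε0 : 0 < ε) (hε : ε < π / 6) (hreg : EpsRegular ε G) {a b c : Pt}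
    (h : IsOpposite ε G b a c) : IsOpposite ε G b c a := by
  obtain ⟨κ, -, hκ⟩ := exists_direction_label hε0 hε hreg b
  obtain ⟨ha, hc, hac⟩ := h
  refine ⟨hc, ha, ?_⟩
  rw [hκ c hc a ha] at hac
  rw [hκ a ha c hc, hac]
  generalize κ c = k
  revert k
  decide

lemma IsOpposite.eq (hε0 : 0 < ε) (hε : ε < π / 6) (hreg : EpsRegular ε G) {a b c d : Pt}
    (hc : IsOpposite ε G b a c) (hd : IsOpposite ε G b a d) : c = d := by
  obtain ⟨κ, hinj, hκ⟩ := exists_direction_label hε0 hε hreg b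
  obtain ⟨ha, hc, hac⟩ := hc
  obtain ⟨-, hd, had⟩ := hd
  rw [hκ c hc a ha] at hac
  rw [hκ d hd a ha, hac] at had
  exact hinj hc hd (add_right_cancel had)

lemma not_isOpposite_self (hε : ε < π / 6) (a b : Pt) : ¬ IsOpposite ε G b a a := by
  rintro ⟨-, -, h⟩
  rw [cwAngle_self] at h
  linarith [h.1, Real.pi_pos]

lemma IsStraightWalk.mono {γ γ' : List Pt} (h : IsStraightWalk ε G γ') (hγ : γ <:+: γ') :
    IsStraightWalk ε G γ :=
  ⟨fun a b hab => h.bond a b (hab.trans hγ), fun a b c habc => h.opposite a b c (habc.trans hγ)⟩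

lemma IsStraightWalk.reverse (hε0 : 0 < ε) (hε : ε < π / 6) (hreg : EpsRegular ε G)
    {γ : List Pt} (h : IsStraightWalk ε G γ) : IsStraightWalk ε G γ.reverse := by
  constructor
  · intro a b hab
    rw [Sym2.eq_swap]
    exact h.bond b a (by simpa using List.reverse_infix.2 hab)
  · intro a b c habc
    exact (h.opposite c b a (by simpa using List.reverse_infix.2 habc)).symm hε0 hε hreg

lemma isStraightWalk_pair {a b : Pt} (h : s(a, b) ∈ G.E) : IsStraightWalk ε G [a, b] := by
  constructor
  · intro x y hxy
    have := hxy.eq_of_length rfl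
    simp_all
  · intro x y z hxyz
    exact absurd hxyz.length_le (by simp)

lemma IsStraightWalk.cons {a b c : Pt} {l : List Pt} (h : IsStraightWalk ε G (b :: c :: l))
    (hopp : IsOpposite ε G b a c) : IsStraightWalk ε G (a :: b :: c :: l) := by
  constructor
  · intro x y hxy
    rcases List.infix_cons_iff.1 hxy with hxy | hxy
    · simp only [List.cons_prefix_cons] at hxy
      obtain ⟨rfl, rfl, -⟩ := hxy
      rw [Sym2.eq_swap]
      exact hopp.1
    · exact h.bond x y hxy
  · intro x y z hxyz
    rcases List.infix_cons_iff.1 hxyz with hxyz | hxyz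
    · simp only [List.cons_prefix_cons] at hxyz
      obtain ⟨rfl, rfl, rfl, -⟩ := hxyz
      exact hopp
    · exact h.opposite x y z hxyz

lemma infix_triple_iff {γ : List Pt} {a b c : Pt} : [a, b, c] <:+: γ ↔
    ∃ i, i + 2 < γ.length ∧ nth γ i = a ∧ nth γ (i + 1) = b ∧ nth γ (i + 2) = c := by
  constructor
  · rintro ⟨l, m, rfl⟩
    exact ⟨l.length, by simp, by simp [nth], by simp [nth], by simp [nth]⟩
  · rintro ⟨i, hi, rfl, rfl, rfl⟩
    refine ⟨γ.take i, γ.drop (i + 3), ?_⟩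
    conv_rhs => rw [← List.take_append_drop i γ, List.drop_eq_getElem_cons (by omega),
      List.drop_eq_getElem_cons (by omega), List.drop_eq_getElem_cons (by omega)]
    simp [nth, List.getD_eq_getElem?_getD, hi,
      (by omega : i < γ.length), (by omega : i + 1 < γ.length)]

lemma IsStraightWalk.mem_V {γ : List Pt} (h : IsStraightWalk ε G γ) (hlen : 2 ≤ γ.length)
    {x : Pt} (hx : x ∈ γ) : x ∈ G.V := by
  obtain ⟨l, m, rfl⟩ := List.append_of_mem hx
  rcases m with _ | ⟨y, m⟩
  · rcases List.eq_nil_or_concat l with rfl | ⟨l, y, rfl⟩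
    · simp at hlen
    · exact G.mem_V _ (h.bond y x ⟨l, [], by simp⟩) x (by simp)
  · exact G.mem_V _ (h.bond x y ⟨l, m, by simp⟩) x (by simp)

lemma isStraightPath_iff (γ : List Pt) : IsStraightPath ε G γ ↔
    2 ≤ γ.length ∧ IsStraightWalk ε G γ ∧ (pathEdges γ).Nodup := by
  constructor
  · rintro ⟨hlen, -, hchain, hangle, hnodup⟩
    have hbond : ∀ a b, [a, b] <:+: γ → s(a, b) ∈ G.E := fun a b hab => by
      simpa using List.IsChain.infix (R := fun a b => s(a, b) ∈ G.E) hchain hab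
    refine ⟨hlen, ⟨hbond, ?_⟩, hnodup⟩
    intro a b c habc
    refine ⟨?_, hbond b c (List.IsInfix.trans ⟨[a], [], rfl⟩ habc), ?_⟩
    · rw [Sym2.eq_swap]
      exact hbond a b (List.IsInfix.trans ⟨[], [c], rfl⟩ habc)
    · obtain ⟨i, hi, rfl, rfl, rfl⟩ := infix_triple_iff.1 habc
      exact hangle i hi
  · rintro ⟨hlen, hwalk, hnodup⟩
    refine ⟨hlen, fun x hx => hwalk.mem_V hlen hx, ?_, ?_, hnodup⟩
    · refine List.isChain_iff_forall_rel_of_append_cons_cons.2 ?_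
      rintro a b l m rfl
      exact hwalk.bond a b ⟨l, m, by simp⟩
    · intro i hi
      exact (hwalk.opposite _ _ _ (infix_triple_iff.2 ⟨i, hi, rfl, rfl, rfl⟩)).2.2

lemma pathEdges_cons_cons (a b : Pt) (l : List Pt) :
    pathEdges (a :: b :: l) = s(a, b) :: pathEdges (b :: l) := rfl

lemma mem_of_mem_pathEdges {l : List Pt} {e : Sym2 Pt} (he : e ∈ pathEdges l) {x : Pt}
    (hx : x ∈ e) : x ∈ l := by
  obtain ⟨⟨a, b⟩, hab, rfl⟩ := List.mem_map.1 he
  obtain ⟨ha, hb⟩ := List.of_mem_zip hab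
  rcases Sym2.mem_iff.1 hx with rfl | rfl
  · exact ha
  · exact List.mem_of_mem_tail hb

lemma nodup_pathEdges {l : List Pt} (h : l.Nodup) : (pathEdges l).Nodup := by
  induction l with
  | nil => simp [pathEdges]
  | cons a l ih =>
    rcases l with _ | ⟨b, l⟩
    · simp [pathEdges]
    · rw [pathEdges_cons_cons, List.nodup_cons]
      rw [List.nodup_cons] at h
      exact ⟨fun hab => h.1 (mem_of_mem_pathEdges hab (Sym2.mem_mk_left a b)), ih h.2⟩

/-- If all straight paths are open, then a straight walk visits no vertex twice. -/
lemma IsStraightWalk.nodup (hε : ε < π / 6)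
    (hopen : ∀ γ : List Pt, IsStraightPath ε G γ → ¬ IsClosedPath γ)
    {γ : List Pt} (h : IsStraightWalk ε G γ) : γ.Nodup := by
  induction γ with
  | nil => simp
  | cons a l ih =>
    have hl := ih (h.mono (List.suffix_cons a l).isInfix)
    refine List.nodup_cons.2 ⟨fun hal => ?_, hl⟩
    obtain ⟨p, q, rfl⟩ := List.append_of_mem hal
    have hloop : IsStraightWalk ε G (a :: (p ++ [a])) := h.mono ⟨[], q, by simp⟩
    have hp : (p ++ [a]).Nodup := hl.sublist (by simp)
    rcases p with _ | ⟨b, _ | ⟨c, p⟩⟩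
    · exact ne_of_bond (hloop.bond a a List.infix_rfl) rfl
    · exact not_isOpposite_self hε a b (hloop.opposite a b a List.infix_rfl)
    · refine hopen (a :: (b :: c :: p ++ [a]))
        ((isStraightPath_iff _).2 ⟨by simp, hloop, ?_⟩)
        (by rw [IsClosedPath, ← List.cons_append, List.getLast?_concat]; rfl)
      refine List.nodup_cons.2 ⟨fun hab => ?_, nodup_pathEdges hp⟩
      have hbc : s(a, b) ∈ pathEdges (b :: c :: (p ++ [a])) := hab
      rw [pathEdges_cons_cons, List.mem_cons] at hbc
      simp only [List.cons_append, List.nodup_cons, List.mem_cons, List.mem_append,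
        not_or] at hp
      rcases hbc with hbc | hbc
      · simp only [Sym2.eq_iff] at hbc
        tauto
      · have := mem_of_mem_pathEdges hbc (Sym2.mem_mk_right a b)
        simp only [List.mem_cons, List.mem_append] at this
        tauto

lemma isStraightPath_iff_isStraightWalk (hε : ε < π / 6)
    (hopen : ∀ γ : List Pt, IsStraightPath ε G γ → ¬ IsClosedPath γ) (γ : List Pt) :
    IsStraightPath ε G γ ↔ 2 ≤ γ.length ∧ IsStraightWalk ε G γ := by
  rw [isStraightPath_iff]
  exact ⟨fun h => ⟨h.1, h.2.1⟩, fun h => ⟨h.1, h.2, nodup_pathEdges (h.2.nodup hε hopen)⟩⟩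

/-- A straight walk is determined by its first bond and its length. -/
lemma IsStraightWalk.comparable (hε0 : 0 < ε) (hε : ε < π / 6) (hreg : EpsRegular ε G)
    {a b : Pt} {l m : List Pt} (hl : IsStraightWalk ε G (a :: b :: l))
    (hm : IsStraightWalk ε G (a :: b :: m)) :
    a :: b :: l <+: a :: b :: m ∨ a :: b :: m <+: a :: b :: l := by
  induction l generalizing a b m with
  | nil => left; simp [List.cons_prefix_cons]
  | cons c l ih =>
    rcases m with _ | ⟨d, m⟩
    · right; simp [List.cons_prefix_cons]
    · obtain rfl : c = d := (hl.opposite a b c ⟨[], l, rfl⟩).eq hε0 hε hreg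
        (hm.opposite a b d ⟨[], m, rfl⟩)
      have := ih (hl.mono (List.suffix_cons a _).isInfix)
        (hm.mono (List.suffix_cons a _).isInfix)
      simpa [List.cons_prefix_cons] using this

end StraightWalks

section Counting

variable {ε : ℝ} {G : BondGraph}

lemma IsMaximalStraight.reverse (hε0 : 0 < ε) (hε : ε < π / 6) (hreg : EpsRegular ε G)
    (hopen : ∀ γ : List Pt, IsStraightPath ε G γ → ¬ IsClosedPath γ) {γ : List Pt}
    (h : IsMaximalStraight ε G γ) : IsMaximalStraight ε G γ.reverse := by
  obtain ⟨hγ, hmax⟩ := h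
  rw [isStraightPath_iff_isStraightWalk hε hopen] at hγ
  refine ⟨(isStraightPath_iff_isStraightWalk hε hopen _).2
    ⟨by simpa using hγ.1, hγ.2.reverse hε0 hε hreg⟩, fun γ' hγ' hsub => ?_⟩
  rw [List.reverse_reverse, or_comm]
  refine hmax γ' hγ' ?_
  rcases hsub with hsub | hsub
  · exact Or.inr (by simpa using List.reverse_infix.2 hsub)
  · exact Or.inl (List.reverse_infix.1 hsub)

/-- The oriented bonds with no opposite bond at their first vertex. -/
def terminalBonds (ε : ℝ) (G : BondGraph) : Set (Σ _ : Pt, Pt) :=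
  {p | s(p.1, p.2) ∈ G.E ∧ ∀ z, ¬ IsOpposite ε G p.1 z p.2}

/-- The first bond of a path. -/
def firstBond (γ : List Pt) : Σ _ : Pt, Pt := ⟨nth γ 0, nth γ 1⟩

lemma injOn_firstBond (hε0 : 0 < ε) (hε : ε < π / 6) (hreg : EpsRegular ε G)
    (hopen : ∀ γ : List Pt, IsStraightPath ε G γ → ¬ IsClosedPath γ) :
    Set.InjOn firstBond {γ | IsMaximalStraight ε G γ} := by
  have eq_of_isPrefix_of_maximal : ∀ {γ γ' : List Pt},
      IsMaximalStraight ε G γ → IsMaximalStraight ε G γ' →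
      γ <+: γ' → γ = γ' := by
    intro γ γ' h h' hpre
    refine hpre.eq_of_length ?_
    rcases h.2 γ' h'.1 (Or.inl hpre.isInfix) with rfl | rfl <;> simp
  intro γ h γ' h' heq
  obtain ⟨hlen, hwalk⟩ := (isStraightPath_iff_isStraightWalk hε hopen γ).1 h.1
  obtain ⟨hlen', hwalk'⟩ := (isStraightPath_iff_isStraightWalk hε hopen γ').1 h'.1
  rcases γ with _ | ⟨a, _ | ⟨b, l⟩⟩
  · simp at hlen
  · simp at hlen
  rcases γ' with _ | ⟨a', _ | ⟨b', l'⟩⟩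
  · simp at hlen'
  · simp at hlen'
  simp only [firstBond, nth, List.getD_cons_zero, List.getD_cons_succ, Sigma.mk.injEq,
    heq_eq_eq] at heq
  obtain ⟨rfl, rfl⟩ := heq
  rcases hwalk.comparable hε0 hε hreg hwalk' with hpre | hpre
  · exact eq_of_isPrefix_of_maximal h h' hpre
  · exact (eq_of_isPrefix_of_maximal h' h hpre).symm

lemma image_firstBond (hε0 : 0 < ε) (hε : ε < π / 6) (hreg : EpsRegular ε G)
    (hopen : ∀ γ : List Pt, IsStraightPath ε G γ → ¬ IsClosedPath γ) :
    firstBond '' {γ | IsMaximalStraight ε G γ} = terminalBonds ε G := by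
  have hpath := isStraightPath_iff_isStraightWalk hε hopen
  ext ⟨a, b⟩
  constructor
  · rintro ⟨γ, h, heq⟩
    obtain ⟨hlen, hwalk⟩ := (hpath γ).1 h.1
    rcases γ with _ | ⟨a', _ | ⟨b', l⟩⟩
    · simp at hlen
    · simp at hlen
    simp only [firstBond, nth, List.getD_cons_zero, List.getD_cons_succ, Sigma.mk.injEq,
      heq_eq_eq] at heq
    obtain ⟨rfl, rfl⟩ := heq
    refine ⟨hwalk.bond a' b' ⟨[], l, rfl⟩, fun z hz => ?_⟩
    have := h.2 (z :: a' :: b' :: l) ((hpath _).2 ⟨by simp, hwalk.cons hz⟩)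
      (Or.inl (List.suffix_cons z _).isInfix)
    rcases this with h | h
    · simpa using congrArg List.length h
    · simpa using congrArg List.length h
  · rintro ⟨hab, hterm⟩
    have hbdd : ∀ n, (∃ l : List Pt, l.length = n ∧ IsStraightWalk ε G (a :: b :: l)) →
        n ≤ G.V.ncard := by
      rintro n ⟨l, rfl, hl⟩
      classical
      have hnodup := hl.nodup hε hopen
      have hsub : ((a :: b :: l).toFinset : Set Pt) ⊆ G.V := fun x hx =>
        hl.mem_V (by simp) (by simpa using hx)
      have hle := Set.ncard_le_ncard hsub G.finV
      rw [Set.ncard_coe_finset, List.toFinset_card_of_nodup hnodup] at hle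
      simp only [List.length_cons] at hle
      omega
    obtain ⟨l, hl, hmax⟩ : ∃ l : List Pt, IsStraightWalk ε G (a :: b :: l) ∧
        ∀ l', IsStraightWalk ε G (a :: b :: l') → l'.length ≤ l.length := by
      classical
      obtain ⟨l, hlen, hl⟩ := Nat.findGreatest_spec
        (P := fun n => ∃ l : List Pt, l.length = n ∧ IsStraightWalk ε G (a :: b :: l))
        (Nat.zero_le G.V.ncard) ⟨[], rfl, isStraightWalk_pair hab⟩
      refine ⟨l, hl, fun l' hl' => ?_⟩
      rw [hlen]
      exact Nat.le_findGreatest (hbdd _ ⟨l', rfl, hl'⟩) ⟨l', rfl, hl'⟩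
    have heq : ∀ γ, IsStraightWalk ε G γ → a :: b :: l <:+: γ → γ = a :: b :: l := by
      rintro _ hγ ⟨p, q, rfl⟩
      have hq := hmax (l ++ q) (hγ.mono ⟨p, [], by simp⟩)
      obtain rfl : q = [] := by simpa using hq
      rcases List.eq_nil_or_concat p with rfl | ⟨p, z, rfl⟩
      · simp
      · exact absurd (hγ.opposite z a b ⟨p, l, by simp⟩) (hterm z)
    refine ⟨a :: b :: l, ⟨(hpath _).2 ⟨by simp, hl⟩, fun γ hγ hsub => ?_⟩, rfl⟩
    have hγ' := ((hpath γ).1 hγ).2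
    rcases hsub with hsub | hsub
    · exact Or.inl (heq γ hγ' hsub)
    · right
      rw [← heq _ (hγ'.reverse hε0 hε hreg) hsub, List.reverse_reverse]

/-- The stratum of a list of points. -/
def toStratum (γ : List Pt) : Stratum := Quotient.mk revSetoid γ

lemma toStratum_eq_iff {γ γ' : List Pt} :
    toStratum γ = toStratum γ' ↔ γ = γ' ∨ γ = γ'.reverse :=
  Quotient.eq (r := revSetoid)

/-- Every maximal stratum comes from exactly two oriented maximal paths. -/
lemma ncard_maximal_eq_two_mul (hε0 : 0 < ε) (hε : ε < π / 6) (hreg : EpsRegular ε G)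
    (hopen : ∀ γ : List Pt, IsStraightPath ε G γ → ¬ IsClosedPath γ)
    (hfin : {γ | IsMaximalStraight ε G γ}.Finite) :
    {γ | IsMaximalStraight ε G γ}.ncard =
      2 * (toStratum '' {γ | IsMaximalStraight ε G γ}).ncard := by
  classical
  have hM : {γ | IsMaximalStraight ε G γ} = (hfin.toFinset : Set (List Pt)) := by simp
  rw [hM, ← Finset.coe_image, Set.ncard_coe_finset, Set.ncard_coe_finset, mul_comm,
    Finset.card_eq_sum_card_image toStratum, Finset.sum_const_nat]
  intro s hs
  obtain ⟨γ, hγ, rfl⟩ := Finset.mem_image.1 hs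
  have hγ' : IsMaximalStraight ε G γ := by simpa using hγ
  have hfiber : (hfin.toFinset.filter fun γ' => toStratum γ' =
      toStratum γ) = {γ, γ.reverse} := by
    ext γ'
    simp only [Finset.mem_filter, toStratum_eq_iff, Finset.mem_insert, Finset.mem_singleton,
      and_iff_right_iff_imp]
    rintro (rfl | rfl)
    · exact hγ
    · simpa using hγ'.reverse hε0 hε hreg hopen
  rw [hfiber, Finset.card_pair]
  intro hrev
  refine hopen γ hγ'.1 ?_
  rw [IsClosedPath, ← List.head?_reverse, ← hrev]

open Classical in
/-- The neighbors of a vertex, as a finite set. -/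
def nbhdFinset (G : BondGraph) (x : Pt) : Finset Pt :=
  G.finV.toFinset.filter fun y => s(x, y) ∈ G.E

@[simp] lemma mem_nbhdFinset {x y : Pt} : y ∈ nbhdFinset G x ↔ s(x, y) ∈ G.E := by
  simp only [nbhdFinset, Finset.mem_filter, Set.Finite.mem_toFinset, and_iff_right_iff_imp]
  exact fun h => G.mem_V _ h y (by simp)

lemma coe_nbhdFinset (x : Pt) : (nbhdFinset G x : Set Pt) = nbhd G x := by
  ext y
  simp [nbhd]

lemma card_nbhdFinset (x : Pt) : (nbhdFinset G x).card = deg G x := by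
  rw [deg, ← coe_nbhdFinset, Set.ncard_coe_finset]

open Classical in
lemma coe_sigma_terminalBonds : (G.finV.toFinset.sigma fun x =>
    (nbhdFinset G x).filter fun y => ∀ z, ¬ IsOpposite ε G x z y :
      Set (Σ _ : Pt, Pt)) = terminalBonds ε G := by
  ext ⟨x, y⟩
  simp only [Finset.coe_sigma, Set.mem_sigma_iff, Finset.mem_coe, Set.Finite.mem_toFinset,
    Finset.mem_filter, mem_nbhdFinset, terminalBonds, Set.mem_ofPred_eq, and_iff_right_iff_imp]
  exact fun h => G.mem_V _ h.1 x (by simp)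

open Classical in
lemma four_sub_deg (hε0 : 0 < ε) (hε : ε < π / 6) (hreg : EpsRegular ε G) {x : Pt}
    (hx : x ∈ G.V) :
    (4 : ℤ) - deg G x =
      ((nbhdFinset G x).filter fun y => ∀ z, ¬ IsOpposite ε G x z y).card +
      2 * ((if deg G x = 0 then 2 else 0) +
        if deg G x = 1 ∨ V2pi ε G x then 1 else 0) := by
  obtain ⟨κ, hinj, hκ⟩ := exists_direction_label hε0 hε hreg x
  have hmem : ∀ y, y ∈ nbhdFinset G x ↔ y ∈ nbhd G x := fun y => mem_nbhdFinset
  have hfilter : ((nbhdFinset G x).filter fun y => ∀ z, ¬ IsOpposite ε G x z y) =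
      (nbhdFinset G x).filter fun y => ∀ z ∈ nbhdFinset G x, κ z ≠ κ y + 2 := by
    refine Finset.filter_congr fun y hy => forall_congr' fun z => ?_
    rw [hmem] at hy
    rw [hmem]
    exact ⟨fun h hz hzy => h ⟨hz, hy, (hκ y hy z hz).2 hzy⟩,
      fun h hopp => h hopp.1 ((hκ y hy z hopp.1).1 hopp.2.2)⟩
  have hV2 : V2pi ε G x ↔ (nbhdFinset G x).card = 2 ∧
      ∃ y ∈ nbhdFinset G x, ∃ z ∈ nbhdFinset G x, κ z = κ y + 2 := by
    constructor
    · rintro ⟨-, y, z, hyz, hN, hangle⟩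
      have hy : y ∈ nbhd G x := by simp [hN]
      have hz : z ∈ nbhd G x := by simp [hN]
      refine ⟨?_, y, (hmem y).2 hy, z, (hmem z).2 hz, (hκ y hy z hz).1 hangle⟩
      rw [card_nbhdFinset, deg, hN, Set.ncard_pair hyz]
    · rintro ⟨hcard, y, hy, z, hz, hyz⟩
      have hne : y ≠ z := by
        rintro rfl
        exact absurd (left_eq_add.1 hyz) (by decide)
      have hN : {y, z} = nbhdFinset G x := Finset.eq_of_subset_of_card_le
        (by simp [Finset.insert_subset_iff, -mem_nbhdFinset, hy, hz])
        (by rw [hcard, Finset.card_pair hne])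
      refine ⟨hx, y, z, hne, ?_, (hκ y ((hmem y).1 hy) z ((hmem z).1 hz)).2 hyz⟩
      rw [← coe_nbhdFinset, ← hN]
      simp
  rw [hfilter, ← card_nbhdFinset]
  simp only [hV2]
  exact four_sub_card_eq _ κ (by rwa [coe_nbhdFinset])

open Classical in
lemma ncard_strataSet (hfin : {γ | IsMaximalStraight ε G γ}.Finite) :
    (strataSet ε G).ncard =
      (toStratum '' {γ | IsMaximalStraight ε G γ}).ncard +
      2 * (G.finV.toFinset.filter fun x => deg G x = 0).card +
      (G.finV.toFinset.filter fun x => deg G x = 1 ∨ V2pi ε G x).card := by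
  have hsingle : ∀ x y : Pt, toStratum [x] = toStratum [y] ↔ x = y := by
    intro x y
    simp [toStratum_eq_iff]
  have hinj : Function.Injective fun p : Pt × Fin 2 =>
      ((toStratum [p.1], p.2) : Stratum × Fin 2) := by
    rintro ⟨x, i⟩ ⟨y, j⟩ h
    have h1 := (hsingle x y).1 (congrArg Prod.fst h)
    have h2 := congrArg Prod.snd h
    exact Prod.ext h1 h2
  have hlong : ∀ γ x, IsMaximalStraight ε G γ →
      toStratum γ ≠ toStratum [x] := by
    intro γ x h heq
    have hlen := h.1.1
    rw [toStratum_eq_iff] at heq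
    rcases heq with rfl | rfl <;> simp at hlen
  have hV2 : ∀ x, V2pi ε G x → deg G x = 2 := by
    rintro x ⟨-, y, z, hyz, hN, -⟩
    rw [deg, hN, Set.ncard_pair hyz]
  set Z := G.finV.toFinset.filter fun x => deg G x = 0 with hZ
  set O := G.finV.toFinset.filter fun x => deg G x = 1 ∨ V2pi ε G x with hO
  have hP : {p : Stratum × Fin 2 | ∃ γ : List Pt, IsMaximalStraight ε G γ ∧
      p = (toStratum γ, 0)} =
      (fun s : Stratum => (s, (0 : Fin 2))) ''
        (toStratum '' {γ | IsMaximalStraight ε G γ}) := by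
    ext p
    constructor
    · rintro ⟨γ, hγ, rfl⟩
      exact ⟨_, ⟨γ, hγ, rfl⟩, rfl⟩
    · rintro ⟨_, ⟨γ, hγ, rfl⟩, rfl⟩
      exact ⟨γ, hγ, rfl⟩
  have hD : {p : Stratum × Fin 2 | ∃ x ∈ G.V, deg G x = 0 ∧
      (p = (toStratum [x], 0) ∨ p = (toStratum [x], 1))} =
      (fun p : Pt × Fin 2 => ((toStratum [p.1], p.2) : Stratum × Fin 2)) ''
        (Z ×ˢ Finset.univ : Finset (Pt × Fin 2)) := by
    ext p
    constructor
    · rintro ⟨x, hx, h0, rfl | rfl⟩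
      · exact ⟨(x, 0), by simp [hZ, hx, h0], rfl⟩
      · exact ⟨(x, 1), by simp [hZ, hx, h0], rfl⟩
    · rintro ⟨⟨x, i⟩, hx, rfl⟩
      simp only [hZ, Finset.mem_coe, Finset.mem_product, Finset.mem_filter,
        Set.Finite.mem_toFinset] at hx
      refine ⟨x, hx.1.1, hx.1.2, ?_⟩
      fin_cases i <;> simp
  have hS : {p : Stratum × Fin 2 | ∃ x ∈ G.V, (deg G x = 1 ∨ V2pi ε G x) ∧
      p = (toStratum [x], 0)} =
      (fun p : Pt × Fin 2 => ((toStratum [p.1], p.2) : Stratum × Fin 2)) ''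
        (O ×ˢ {0} : Finset (Pt × Fin 2)) := by
    ext p
    constructor
    · rintro ⟨x, hx, h1, rfl⟩
      exact ⟨(x, 0), by simp [hO, hx, h1], rfl⟩
    · rintro ⟨⟨x, i⟩, hx, rfl⟩
      simp only [hO, Finset.mem_coe, Finset.mem_product, Finset.mem_filter,
        Set.Finite.mem_toFinset, Finset.mem_singleton] at hx
      exact ⟨x, hx.1.1, hx.1.2, by rw [hx.2]⟩
  have hdisj : Disjoint (Z ×ˢ Finset.univ : Finset (Pt × Fin 2)) (O ×ˢ {0}) := by
    rw [Finset.disjoint_left]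
    rintro ⟨x, i⟩ h h'
    have h0 : deg G x = 0 := by simpa [hZ] using (Finset.mem_filter.1 (Finset.mem_product.1 h).1).2
    rcases (Finset.mem_filter.1 (Finset.mem_product.1 h').1).2 with h1 | h1
    · have h1' : deg G x = 1 := h1
      omega
    · have := hV2 x h1
      omega
  have hunion : strataSet ε G =
      {p : Stratum × Fin 2 | ∃ γ : List Pt, IsMaximalStraight ε G γ ∧ p = (toStratum γ, 0)} ∪
      {p : Stratum × Fin 2 | ∃ x ∈ G.V, deg G x = 0 ∧
        (p = (toStratum [x], 0) ∨ p = (toStratum [x], 1))} ∪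
      {p : Stratum × Fin 2 | ∃ x ∈ G.V, (deg G x = 1 ∨ V2pi ε G x) ∧
        p = (toStratum [x], 0)} := rfl
  rw [hunion, hP, hD, hS, Set.union_assoc, ← Set.image_union, ← Finset.coe_union,
    Set.ncard_union_eq ?_ ((hfin.image _).image _) ((Finset.finite_toSet _).image _),
    Set.ncard_image_of_injective _ hinj, Set.ncard_coe_finset, Finset.card_union_of_disjoint hdisj,
    Set.ncard_image_of_injective _ (Prod.mk_left_injective 0)]
  · simp only [Finset.card_product, Finset.card_univ, Fintype.card_fin, Finset.card_singleton]
    ring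
  · rw [Set.disjoint_left]
    rintro _ ⟨_, ⟨γ, hγ, rfl⟩, rfl⟩ ⟨⟨x, i⟩, -, heq⟩
    exact hlong γ x hγ (congrArg Prod.fst heq).symm

end Counting

/-- **Lemma (properties of graphs containing only open paths, (ii)).**
`F_bond(G) = Σ_{x ∈ V} (4 − #N(x,E)) = 2·#S(G)`. -/
theorem bond_energy_eq_twice_strata (ε : ℝ) (hε0 : 0 < ε) (hε : ε < π / 6)
    (G : BondGraph) (hreg : EpsRegular ε G)
    (hopen : ∀ γ : List Pt, IsStraightPath ε G γ → ¬ IsClosedPath γ) :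
    Fbond G = ∑ᶠ x ∈ G.V, ((4 : ℤ) - (deg G x : ℤ)) ∧
      Fbond G = 2 * ((strataSet ε G).ncard : ℤ) := by
  classical
  refine ⟨rfl, ?_⟩
  have himage := image_firstBond hε0 hε hreg hopen
  have hinj := injOn_firstBond hε0 hε hreg hopen
  have hfinT : (terminalBonds ε G).Finite := by
    rw [← coe_sigma_terminalBonds]
    exact Finset.finite_toSet _
  have hfin : {γ | IsMaximalStraight ε G γ}.Finite :=
    Set.Finite.of_finite_image (himage ▸ hfinT) hinj
  have hcount : ∑ x ∈ G.finV.toFinset,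
      ((nbhdFinset G x).filter fun y => ∀ z, ¬ IsOpposite ε G x z y).card =
      2 * (toStratum '' {γ | IsMaximalStraight ε G γ}).ncard := by
    rw [← ncard_maximal_eq_two_mul hε0 hε hreg hopen hfin, ← hinj.ncard_image, himage,
      ← coe_sigma_terminalBonds, Set.ncard_coe_finset, Finset.card_sigma]
  rw [Fbond, finsum_mem_eq_finite_toFinset_sum _ G.finV, Finset.sum_congr rfl fun x hx =>
    four_sub_deg hε0 hε hreg ((Set.Finite.mem_toFinset _).1 hx), Finset.sum_add_distrib,
    ← Finset.mul_sum, Finset.sum_add_distrib, ← Nat.cast_sum, hcount, ncard_strataSet hfin,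
    Finset.sum_boole, ← Finset.sum_filter, Finset.sum_const]
  push_cast
  rw [nsmul_eq_mul]
  ring

end
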